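/- Let λ : G → A be a group homomorphism, let n ≥ 1, and let f : C^{gp}_n(M;ℤ)_G → A be a normalized group n-cocycle, i.e. a homomorphism with f(D^{gp}_n(M;ℤ)_G) = 0 and f ∘ ∂^{gp}_{n+1} = 0. Then the composite Φ_{f,λ} := (f ⊗ id_A) ∘ ψ_{n,λ} ∘ γ_n ∘ proj_n : P_n(X;ℤ) → A ⊗_ℤ A vanishes on D_n(X;ℤ) and satisfies Φ_{f,λ} ∘ ∂_{n+1} = 0 on P_{n+1}(X;ℤ); that is, Φ_{f,λ} defines an n-cocycle of the G-Alexander multiple conjugation biquandle X, i.e. a cocycle of the complex C_*(X;ℤ) = P_*(X;ℤ)/D_*(X;ℤ). -/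

import Mathlib

open FreeAbelianGroup
open scoped TensorProduct

namespace GAlex

variable {G M A : Type*} [Group G] [AddCommGroup M] [DistribMulAction Gᵐᵒᵖ M] [AddCommGroup A]

/-- The right action `m · g` of a group element `g : G` on `m : M`
(coming from the right `ℤ[G]`-module structure on `M`). -/
def ract (m : M) (g : G) : M := MulOpposite.op g • m

variable (φ : G →* G)

/-- The operation `(m,g) ⊳ (n,h) = (mh + n(φ(h) − h), h⁻¹gh)` of the `G`-Alexander biquandle. -/
def under (x y : M × G) : M × G :=
  (ract x.1 y.2 + ract y.1 (φ y.2) - ract y.1 y.2, y.2⁻¹ * x.2 * y.2)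

/-- The operation `(m,g) ⊚ (n,h) = (mφ(h), g)` of the `G`-Alexander biquandle. -/
def _root_.GAlex.over (x y : M × G) : M × G := (ract x.1 (φ y.2), x.2)

/-- The face `g_{⟨p⟩}` (delete the `p`-th entry). -/
def dGdel (n : ℕ) (p : Fin (n + 1)) (g : Fin (n + 1) → G) : Fin n → G :=
  fun j => g (p.succAbove j)

/-- The face `g_{⟨⊲p⟩}` (conjugate the first entries by `g p` and delete the `p`-th entry). -/
def dGconj (n : ℕ) (p : Fin (n + 1)) (g : Fin (n + 1) → G) : Fin n → G :=
  fun j => if (j : ℕ) < (p : ℕ) then (g p)⁻¹ * g j.castSucc * g p else g j.succ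

/-- The face `m_{⟨p⟩}` (merge the two entries adjacent to position `p`;
for `p = 0` drop the first entry). -/
def dMmer (n : ℕ) (p : Fin (n + 1)) (m : Fin (n + 1) → M) : Fin n → M :=
  fun j =>
    if (j : ℕ) + 1 < (p : ℕ) then m j.castSucc
    else if (j : ℕ) + 1 = (p : ℕ) then m j.castSucc + m j.succ
    else m j.succ

/-- The face `m_{⟨⊲p⟩}`. -/
def dMconj (n : ℕ) (p : Fin (n + 1)) (g : Fin (n + 1) → G) (m : Fin (n + 1) → M) : Fin n → M :=
  fun j =>
    if (j : ℕ) + 1 < (p : ℕ) then ract (m j.castSucc) (g p)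
    else if (j : ℕ) + 1 = (p : ℕ) then ract (m j.castSucc) (g p) + ract (m j.succ) (φ (g p))
    else ract (m j.succ) (φ (g p))

/-- The boundary map `∂^{BR_U}_{n+1} : C^{BR_U}_{n+1}(X;ℤ) → C^{BR_U}_n(X;ℤ)`
(the boundary `∂^{BR_U}_k` is `0` for `k ≤ 1`, which agrees with this formula at `n = 0`). -/
def dBRU (n : ℕ) :
    FreeAbelianGroup ((Fin (n + 1) → G) × (Fin (n + 1) → M)) →+
      FreeAbelianGroup ((Fin n → G) × (Fin n → M)) :=
  FreeAbelianGroup.lift fun x =>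
    ∑ p : Fin (n + 1),
      (-1 : ℤ) ^ (p : ℕ) •
        (FreeAbelianGroup.of (dGdel n p x.1, dMmer n p x.2) -
          FreeAbelianGroup.of (dGconj n p x.1, dMconj φ n p x.1 x.2))

/-- The birack boundary map `∂^{BR}_{n+1} : C^{BR}_{n+1}(X;ℤ) → C^{BR}_n(X;ℤ)`
for the `G`-Alexander biquandle `X = M × G` (with trivial `X`-set). -/
def dBR (n : ℕ) :
    FreeAbelianGroup (Fin (n + 1) → M × G) →+ FreeAbelianGroup (Fin n → M × G) :=
  FreeAbelianGroup.lift fun x =>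
    ∑ p : Fin (n + 1),
      (-1 : ℤ) ^ (p : ℕ) •
        (FreeAbelianGroup.of (fun j => x (p.succAbove j)) -
          FreeAbelianGroup.of (fun j : Fin n =>
            if (j : ℕ) < (p : ℕ) then under φ (x j.castSucc) (x p)
            else GAlex.over φ (x j.succ) (x p)))

/-- `γ_n((m₁,g₁),…,(m_n,g_n)) = (g₁,…,g_n; m₁−m₂, …, m_{n−1}−m_n, m_n)`. -/
def gammaMap (n : ℕ) :
    FreeAbelianGroup (Fin n → M × G) →+ FreeAbelianGroup ((Fin n → G) × (Fin n → M)) :=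
  FreeAbelianGroup.lift fun x =>
    FreeAbelianGroup.of
      (fun j => (x j).2,
       fun j => (x j).1 - if h : (j : ℕ) + 1 < n then (x ⟨(j : ℕ) + 1, h⟩).1 else 0)

/-- `r_n(g₁,…,g_n; m₁,…,m_n) = ((m₁+⋯+m_n, g₁), (m₂+⋯+m_n, g₂), …, (m_n, g_n))`. -/
def rMap (n : ℕ) :
    FreeAbelianGroup ((Fin n → G) × (Fin n → M)) →+ FreeAbelianGroup (Fin n → M × G) :=
  FreeAbelianGroup.lift fun p =>
    FreeAbelianGroup.of fun j => ((∑ i ∈ Finset.Ici j, p.2 i), p.1 j)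

/-- The boundary map `∂^{BR_U}_{d+1}` of `C^{BR_U}_*(X;ℤ)_X` (the version with `X`-set `X`,
whose degree-`d` chain group is free on `(1+d)`-tuples); it is `0` in degrees `≤ 1`. -/
def dBRUX : (d : ℕ) →
    FreeAbelianGroup ((Fin (d + 2) → G) × (Fin (d + 2) → M)) →+
      FreeAbelianGroup ((Fin (d + 1) → G) × (Fin (d + 1) → M))
  | 0 => 0
  | d + 1 =>
    FreeAbelianGroup.lift fun x =>
      ∑ i : Fin (d + 2),
        (-1 : ℤ) ^ (i : ℕ) •
          (FreeAbelianGroup.of (dGdel (d + 2) i.succ x.1, dMmer (d + 2) i.succ x.2) -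
            FreeAbelianGroup.of (dGconj (d + 2) i.succ x.1, dMconj φ (d + 2) i.succ x.1 x.2))

/-- The boundary map `∂^{BR}_{d+1}` of `C^{BR}_*(X;ℤ)_X` (the version with `X`-set `X`);
it is `0` in degrees `≤ 1`. -/
def dBRX : (d : ℕ) →
    FreeAbelianGroup (Fin (d + 2) → M × G) →+ FreeAbelianGroup (Fin (d + 1) → M × G)
  | 0 => 0
  | d + 1 =>
    FreeAbelianGroup.lift fun x =>
      ∑ i : Fin (d + 2),
        (-1 : ℤ) ^ (i : ℕ) •
          (FreeAbelianGroup.of (fun j => x (i.succ.succAbove j)) -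
            FreeAbelianGroup.of (fun j : Fin (d + 2) =>
              if (j : ℕ) < (i : ℕ) + 1 then under φ (x j.castSucc) (x i.succ)
              else GAlex.over φ (x j.succ) (x i.succ)))


/-- The subgroup of `G`-coinvariants relations in `C^{gp}_n(M;ℤ)`:
generated by all `(m₁g,…,m_ng) − (m₁,…,m_n)`. -/
def coinvSub (n : ℕ) : AddSubgroup (FreeAbelianGroup (Fin n → M)) :=
  AddSubgroup.closure
    {z | ∃ (m : Fin n → M) (g : G),
        z = FreeAbelianGroup.of (fun i => ract (m i) g) - FreeAbelianGroup.of m}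

/-- The coinvariant group chain group `C^{gp}_n(M;ℤ)_G`. -/
abbrev CgpG (n : ℕ) : Type _ :=
  FreeAbelianGroup (Fin n → M) ⧸ coinvSub (G := G) (M := M) n

/-- The group-homology boundary map `∂^{gp}_{n+1} : C^{gp}_{n+1}(M;ℤ) → C^{gp}_n(M;ℤ)`
(it is `0` in degrees `≤ 1`, which agrees with this formula at `n = 0`). -/
def dgp (n : ℕ) :
    FreeAbelianGroup (Fin (n + 1) → M) →+ FreeAbelianGroup (Fin n → M) :=
  FreeAbelianGroup.lift fun m =>
    (∑ p : Fin (n + 1), (-1 : ℤ) ^ (p : ℕ) • FreeAbelianGroup.of (dMmer n p m)) +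
      (-1 : ℤ) ^ (n + 1) • FreeAbelianGroup.of fun j : Fin n => m j.castSucc

/-- `|k| = k₁ + ⋯ + k_n`. -/
def wt {n : ℕ} (k : Fin n → Bool) : ℕ := ∑ i, if k i then 1 else 0

/-- `g_{k,i} = φ(g₀^{k₀} ⋯ g_i^{k_i}) · g_{i+1}^{k_{i+1}} ⋯ g_{n-1}^{k_{n-1}}`
(indices written `0`-based; the products are ordered). -/
def gki {n : ℕ} (g : Fin n → G) (k : Fin n → Bool) (i : Fin n) : G :=
  φ ((((List.finRange n).filter fun j => decide (j ≤ i)).map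
        fun j => if k j then g j else 1).prod) *
    (((List.finRange n).filter fun j => decide (i < j)).map
        fun j => if k j then g j else 1).prod

/-- The value of `ψ` on a generator:
`Σ_{k, k₀ = 0} (−1)^{|k|} (m₀ g_{k,0}, …, m_n g_{k,n})`, as an element of the free
abelian group (before passing to coinvariants). -/
def psiVal (n : ℕ) (x : (Fin (n + 1) → G) × (Fin (n + 1) → M)) :
    FreeAbelianGroup (Fin (n + 1) → M) :=
  ∑ k ∈ Finset.univ.filter fun k : Fin (n + 1) → Bool => k 0 = false,
    (-1 : ℤ) ^ wt k • FreeAbelianGroup.of fun i => ract (x.2 i) (gki φ x.1 k i)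

/-- `ψ` as a homomorphism into the free abelian group (before coinvariants). -/
def psiFree (n : ℕ) :
    FreeAbelianGroup ((Fin (n + 1) → G) × (Fin (n + 1) → M)) →+
      FreeAbelianGroup (Fin (n + 1) → M) :=
  FreeAbelianGroup.lift (psiVal φ n)

/-- The homomorphism `ψ : C^{BR_U} → C^{gp}(M;ℤ)_G`. -/
def psiG (n : ℕ) :
    FreeAbelianGroup ((Fin (n + 1) → G) × (Fin (n + 1) → M)) →+
      CgpG (G := G) (M := M) (n + 1) :=
  (QuotientAddGroup.mk' (coinvSub (G := G) (M := M) (n + 1))).comp (psiFree φ n)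

/-- The homomorphism `ψ_{•,λ}`, sending a generator `x` to `ψ(x) ⊗ λ(x₁)` where `x₁` is the
first `G`-entry of `x`. -/
noncomputable def psiLam (lam : G → A) (n : ℕ) :
    FreeAbelianGroup ((Fin (n + 1) → G) × (Fin (n + 1) → M)) →+
      TensorProduct ℤ (CgpG (G := G) (M := M) (n + 1)) A :=
  FreeAbelianGroup.lift fun x =>
    (QuotientAddGroup.mk' (coinvSub (G := G) (M := M) (n + 1)) (psiVal φ n x)) ⊗ₜ[ℤ]
      lam (x.1 0)

/-- `D^{gp}_n(M;ℤ)_G`: the image in the coinvariants of the subgroup generated by tuples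
with a vanishing entry in a position `1 ≤ i ≤ n−1`. -/
def DgpGsub (n : ℕ) : AddSubgroup (CgpG (G := G) (M := M) n) :=
  (AddSubgroup.closure
      {z : FreeAbelianGroup (Fin n → M) |
        ∃ (m : Fin n → M) (i : Fin n),
          (i : ℕ) + 1 < n ∧ m i = 0 ∧ z = FreeAbelianGroup.of m}).map
    (QuotientAddGroup.mk' (coinvSub (G := G) (M := M) n))

/-! Words for the multiple conjugation biquandle complex `P_*(X;ℤ)`.
A block `⟨(m,g₁),(m,g₂),…,(m,g_s)⟩` lying in the group component `{m} × G` is encoded as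
`(m, g₁, [g₂,…,g_s]) : M × G × List G` (so blocks are automatically nonempty),
and a word is a list of blocks. -/

/-- The total length `n₁ + ⋯ + n_k` of a word. -/
def lenW (w : List (M × G × List G)) : ℕ := (w.map fun b => b.2.2.length + 1).sum

/-- Apply `⊳ x` entrywise to a block. -/
def underB (b : M × G × List G) (x : M × G) : M × G × List G :=
  (ract b.1 x.2 + ract x.1 (φ x.2) - ract x.1 x.2, x.2⁻¹ * b.2.1 * x.2,
    b.2.2.map fun g => x.2⁻¹ * g * x.2)

/-- Apply `⊚ x` entrywise to a block. -/
def overB (b : M × G × List G) (x : M × G) : M × G × List G :=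
  (ract b.1 (φ x.2), b.2.1, b.2.2)

/-- The block `⟨x₁⁻¹x₂ ⊚ x₁, …, x₁⁻¹x_s ⊚ x₁⟩` (deleted if `s = 1`). -/
def tildeB (b : M × G × List G) : List (M × G × List G) :=
  match b with
  | (_, _, []) => []
  | (m, h, g₂ :: rest) => [(ract m (φ h), h⁻¹ * g₂, rest.map fun g => h⁻¹ * g)]

/-- Make a (possibly deleted) block in the component `{m} × G` out of a list of `G`-entries. -/
def blockOfList (m : M) : List G → List (M × G × List G)
  | [] => []
  | g :: gs => [(m, g, gs)]

/-- The value of the boundary map `∂` of `P_*(X;ℤ)` on a word. -/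
def dPval (w : List (M × G × List G)) : FreeAbelianGroup (List (M × G × List G)) :=
  ∑ i ∈ (Finset.range w.length).attach,
    (fun b =>
      (-1 : ℤ) ^ lenW (w.take (i : ℕ)) •
        (FreeAbelianGroup.of
            ((w.take (i : ℕ)).map (fun c => underB φ c (b.1, b.2.1)) ++ tildeB φ b ++
              (w.drop ((i : ℕ) + 1)).map fun c => overB φ c (b.1, b.2.1)) +
          ∑ j ∈ Finset.range (b.2.2.length + 1),
            (-1 : ℤ) ^ (j + 1) •
              FreeAbelianGroup.of
                (w.take (i : ℕ) ++ blockOfList b.1 ((b.2.1 :: b.2.2).eraseIdx j) ++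
                  w.drop ((i : ℕ) + 1))))
      (w[(i : ℕ)]'(Finset.mem_range.mp i.2))

/-- The boundary map `∂` of the complex `P_*(X;ℤ)` (all degrees at once). -/
def dP : FreeAbelianGroup (List (M × G × List G)) →+
    FreeAbelianGroup (List (M × G × List G)) :=
  FreeAbelianGroup.lift (dPval φ)

/-- `⌊j;μ⌋`, where the strictly increasing map `μ` is encoded by the subset `T` of positions
taken from the first block: the number of elements of `T` that are `≤ j`. -/
def cntT {N : ℕ} (T : Finset (Fin N)) (j : ℕ) : ℕ := (T.filter fun p : Fin N => (p : ℕ) ≤ j).card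

/-- `1`-based lookup in a list of group elements, with `a₀ = 1`. -/
def idxL (l : List G) (i : ℕ) : G := if i = 0 then 1 else l.getD (i - 1) 1

/-- The entry `a_{⌊j;μ⌋} b_{j−⌊j;μ⌋}` (at `0`-based position `j`) of `⟨⟨a⟩⟨b⟩⟩_μ`. -/
def mergeEntry (la lb : List G) (T : Finset (Fin (la.length + lb.length))) (j : ℕ) : G :=
  idxL la (cntT T j) * idxL lb (j + 1 - cntT T j)

/-- The element `⟨x₁⟩⋯⟨⟨a⟩⟨b⟩⟩⋯⟨x_k⟩ = Σ_μ (−1)^{Σ(μ(k)−k)} ⟨…⟩`, where the two merged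
blocks lie in the component `{m} × G`, `w₁` is the prefix and `w₂` the suffix of the word. -/
def mergeExpand (m : M) (la lb : List G) (w₁ w₂ : List (M × G × List G)) :
    FreeAbelianGroup (List (M × G × List G)) :=
  ∑ T ∈ Finset.univ.filter
      fun T : Finset (Fin (la.length + lb.length)) => T.card = la.length,
    (-1 : ℤ) ^ ((∑ p ∈ T, (p : ℕ)) + ∑ kk ∈ Finset.range la.length, kk) •
      FreeAbelianGroup.of
        (w₁ ++ (m, mergeEntry la lb T 0,
            (List.range (la.length + lb.length - 1)).map
              fun j => mergeEntry la lb T (j + 1)) :: w₂)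

/-- `D_n(X;ℤ)`: the subgroup of `P_n(X;ℤ)` generated by
`⟨x₁⟩⋯⟨a⟩⟨b⟩⋯⟨x_k⟩ − ⟨x₁⟩⋯⟨⟨a⟩⟨b⟩⟩⋯⟨x_k⟩` for consecutive blocks in a common component. -/
def Dsub (n : ℕ) : AddSubgroup (FreeAbelianGroup (List (M × G × List G))) :=
  AddSubgroup.closure
    {z | ∃ (w₁ w₂ : List (M × G × List G)) (m : M) (g : G) (gs : List G) (h : G) (hs : List G),
      lenW (w₁ ++ (m, g, gs) :: (m, h, hs) :: w₂) = n ∧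
      z = FreeAbelianGroup.of (w₁ ++ (m, g, gs) :: (m, h, hs) :: w₂) -
          mergeExpand m (g :: gs) (h :: hs) w₁ w₂}

/-- `P_n(X;ℤ)` as the subgroup generated by the words of total length `n`. -/
def Psub (n : ℕ) : AddSubgroup (FreeAbelianGroup (List (M × G × List G))) :=
  AddSubgroup.closure
    {z | ∃ w : List (M × G × List G), lenW w = n ∧ z = FreeAbelianGroup.of w}

/-- `proj_n`, sending a word all of whose blocks are singletons (necessarily `n` of them)
to the corresponding `n`-tuple, and every other word to `0`. -/
def projP (n : ℕ) :
    FreeAbelianGroup (List (M × G × List G)) →+ FreeAbelianGroup (Fin n → M × G) :=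
  FreeAbelianGroup.lift fun w =>
    if h : w.length = n ∧ ∀ b ∈ w, b.2.2.isEmpty = true then
      FreeAbelianGroup.of fun i : Fin n =>
        ((w[(i : ℕ)]'(h.1.symm ▸ i.2)).1, (w[(i : ℕ)]'(h.1.symm ▸ i.2)).2.1)
    else 0

/-- `Φ_{f,λ} = (f ⊗ id_A) ∘ ψ_{n,λ} ∘ γ_n ∘ proj_n : P_n(X;ℤ) → A ⊗_ℤ A`
(the Lean parameter `n` corresponds to the paper's degree `n+1 ≥ 1`). -/
noncomputable def PhiFLam (lam : G → A) (n : ℕ)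
    (f : CgpG (G := G) (M := M) (n + 1) →+ A) :
    FreeAbelianGroup (List (M × G × List G)) →+ TensorProduct ℤ A A :=
  ((TensorProduct.map f.toIntLinearMap (LinearMap.id : A →ₗ[ℤ] A)).toAddMonoidHom.comp
      (psiLam φ lam n)).comp ((gammaMap (n + 1)).comp (projP (n + 1)))

/-! ### Helper material -/

lemma ract_ract (m : M) (a b : G) : ract (ract m a) b = ract m (a * b) := by
  simp [ract, smul_smul]

lemma ract_add (m m' : M) (a : G) : ract (m + m') a = ract m a + ract m' a := by
  simp [ract]

lemma ract_sub (m m' : M) (a : G) : ract (m - m') a = ract m a - ract m' a := by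
  simp [ract, smul_sub]

lemma ract_zero (a : G) : ract (0 : M) a = 0 := by
  simp [ract]

lemma ract_one (m : M) : ract m (1 : G) = m := by
  simp [ract]

/-- list version of `gki` -/
def gl (L : List G) (i : ℕ) : G := φ ((L.take (i + 1)).prod) * (L.drop (i + 1)).prod

/-- selected entries -/
def hk {n : ℕ} (g : Fin n → G) (k : Fin n → Bool) : Fin n → G := fun j => if k j then g j else 1

lemma finRange_filter_le {n : ℕ} (i : Fin n) :
    ((List.finRange n).filter fun j => decide (j ≤ i)) = (List.finRange n).take (i + 1) := by
  conv_lhs => rw [← List.take_append_drop (i + 1) (List.finRange n)]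
  rw [List.filter_append, List.filter_eq_self.2, List.filter_eq_nil_iff.2, List.append_nil]
  · intro a ha
    rw [List.mem_iff_getElem] at ha
    obtain ⟨j, hj, rfl⟩ := ha
    simp [Fin.le_def]
    omega
  · intro a ha
    rw [List.mem_iff_getElem] at ha
    obtain ⟨j, hj, rfl⟩ := ha
    simp at hj
    simp [Fin.le_def]
    omega

lemma finRange_filter_lt {n : ℕ} (i : Fin n) :
    ((List.finRange n).filter fun j => decide (i < j)) = (List.finRange n).drop (i + 1) := by
  conv_lhs => rw [← List.take_append_drop (i + 1) (List.finRange n)]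
  rw [List.filter_append, List.filter_eq_nil_iff.2, List.filter_eq_self.2, List.nil_append]
  · intro a ha
    rw [List.mem_iff_getElem] at ha
    obtain ⟨j, hj, rfl⟩ := ha
    simp [Fin.lt_def]
    omega
  · intro a ha
    rw [List.mem_iff_getElem] at ha
    obtain ⟨j, hj, rfl⟩ := ha
    simp at hj
    simp [Fin.lt_def]
    omega

lemma gki_eq {n : ℕ} (g : Fin n → G) (k : Fin n → Bool) (i : Fin n) :
    gki φ g k i = gl φ (List.ofFn (hk g k)) i := by
  unfold gki gl
  rw [finRange_filter_le, finRange_filter_lt, List.map_take, List.map_drop, List.ofFn_eq_map]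
  rfl

/-- conjugate the first `p` entries -/
def cj {n : ℕ} (p : ℕ) (y : G) (q : Fin n → G) : Fin n → G :=
  fun j => if (j : ℕ) < p then y⁻¹ * q j * y else q j

lemma ofFn_insertNth {n : ℕ} {α : Type*} (p : Fin (n + 1)) (z : α) (q : Fin n → α) :
    List.ofFn (p.insertNth z q : Fin (n + 1) → α) =
      (List.ofFn q).take p ++ z :: (List.ofFn q).drop p := by
  apply List.ext_getElem
  · simp
    omega
  · intro j h1 h2
    have h1 : j < n + 1 := by simpa [Nat.lt_succ_iff] using h1
    rw [List.getElem_ofFn]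
    rcases lt_trichotomy j (p : ℕ) with h | h | h
    · rw [List.getElem_append_left (by simp; omega)]
      have : (⟨j, h1⟩ : Fin (n + 1)) = p.succAbove ⟨j, by omega⟩ := by
        rw [Fin.succAbove_of_castSucc_lt _ _ (by simpa [Fin.lt_def] using h)]; rfl
      rw [this, Fin.insertNth_apply_succAbove]
      simp
    · have : (⟨j, h1⟩ : Fin (n + 1)) = p := Fin.ext h
      rw [this, Fin.insertNth_apply_same]
      rw [List.getElem_append_right (by simp; omega)]
      simp [h, Nat.min_eq_left (Nat.le_of_lt_succ p.2)]
    · obtain ⟨j, rfl⟩ : ∃ i, j = i + 1 := ⟨j - 1, by omega⟩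
      have : (⟨j + 1, h1⟩ : Fin (n + 1)) = p.succAbove ⟨j, by omega⟩ := by
        rw [Fin.succAbove_of_le_castSucc _ _ (by simpa [Fin.le_def] using (by omega : (p : ℕ) ≤ j))]
        rfl
      rw [this, Fin.insertNth_apply_succAbove]
      rw [List.getElem_append_right (by simp; omega)]
      have e : j + 1 - (List.take (↑p) (List.ofFn q)).length = (j - p) + 1 := by
        simp [Nat.min_eq_left (Nat.le_of_lt_succ p.2)]; omega
      simp only [e, List.getElem_cons_succ, List.getElem_drop, List.getElem_ofFn]
      congr 2
      omega

lemma ofFn_cj {n : ℕ} (p : ℕ) (y : G) (q : Fin n → G) :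
    List.ofFn (cj p y q) =
      ((List.ofFn q).take p).map (fun x => y⁻¹ * x * y) ++ (List.ofFn q).drop p := by
  apply List.ext_getElem
  · simp
    omega
  · intro j h1 h2
    simp at h1
    rw [List.getElem_ofFn]
    unfold cj
    by_cases h : j < p
    · rw [List.getElem_append_left (by simp; omega)]
      simp [h]
    · rw [List.getElem_append_right (by simp; omega)]
      simp only [h, if_false, List.getElem_drop, List.getElem_ofFn]
      congr 2
      simp
      omega

lemma prod_conj (y : G) (A : List G) : (A.map (fun x => y⁻¹ * x * y)).prod = y⁻¹ * A.prod * y := by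
  induction A with
  | nil => simp
  | cons a A ih => rw [List.map_cons, List.prod_cons, ih, List.prod_cons]; group


lemma phi_comm (hφ : ∀ g : G, φ g ∈ Subgroup.center G) (a b : G) : φ a * b = b * φ a := ((Subgroup.mem_center_iff.1 (hφ a)) b).symm

lemma phi_conj (hφ : ∀ g : G, φ g ∈ Subgroup.center G) (y a : G) : φ (y⁻¹ * a * y) = φ a := by
  simp only [map_mul, map_inv]
  rw [mul_assoc, phi_comm φ hφ a (φ y)]
  simp

lemma glA (hφ : ∀ g : G, φ g ∈ Subgroup.center G) (A B : List G) (y z : G) (i : ℕ) (hi : i < A.length) :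
    y * gl φ (A.map (fun x => y⁻¹ * x * y) ++ z :: B) i = gl φ (A ++ (y * z) :: B) i := by
  unfold gl
  rw [List.take_append_of_le_length (by simpa using hi), List.take_append_of_le_length (by omega),
    List.drop_append_of_le_length (by simpa using hi), List.drop_append_of_le_length (by omega),
    ← List.map_take, ← List.map_drop, prod_conj, List.prod_append, List.prod_append, prod_conj,
    phi_conj φ hφ, ← mul_assoc, ← phi_comm φ hφ]
  simp [mul_assoc]

lemma glB (hφ : ∀ g : G, φ g ∈ Subgroup.center G) (A B : List G) (y z : G) (i : ℕ) (hi : A.length ≤ i) :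
    φ y * gl φ (A.map (fun x => y⁻¹ * x * y) ++ z :: B) i = gl φ (A ++ (y * z) :: B) i := by
  unfold gl
  obtain ⟨j, rfl⟩ := Nat.exists_eq_add_of_le hi
  have e1 : ∀ (A' : List G) (w : G), A'.length = A.length →
      (A' ++ w :: B).take (A.length + j + 1) = A' ++ w :: B.take j := by
    intro A' w h
    rw [add_assoc, ← h, List.take_length_add_append]
    simp
  have e2 : ∀ (A' : List G) (w : G), A'.length = A.length →
      (A' ++ w :: B).drop (A.length + j + 1) = B.drop j := by
    intro A' w h
    rw [add_assoc, ← h, List.drop_length_add_append]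
    simp
  rw [e1 _ _ (by simp), e1 _ _ rfl, e2 _ _ (by simp), e2 _ _ rfl]
  simp only [List.prod_append, List.prod_cons, prod_conj, map_mul φ]
  have := phi_comm φ hφ y (φ A.prod)
  have h2 := phi_conj φ hφ y A.prod
  simp only [map_mul] at h2
  rw [h2]
  rw [← mul_assoc, ← mul_assoc (φ y), this]
  simp [mul_assoc]

lemma glC (A B : List G) (i : ℕ) (hi : i < A.length) :
    gl φ (A ++ 1 :: B) i = gl φ (A ++ B) i := by
  unfold gl
  rw [List.take_append_of_le_length (by omega), List.take_append_of_le_length (by omega),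
    List.drop_append_of_le_length (by omega), List.drop_append_of_le_length (by omega)]
  simp

lemma glD (A B : List G) (i : ℕ) (hi : A.length ≤ i + 1) :
    gl φ (A ++ 1 :: B) (i + 1) = gl φ (A ++ B) i := by
  unfold gl
  obtain ⟨j, hj⟩ := Nat.exists_eq_add_of_le hi
  rw [hj, add_assoc, List.take_length_add_append, List.drop_length_add_append,
    List.take_length_add_append, List.drop_length_add_append]
  simp

lemma K3 (hφ : ∀ g : G, φ g ∈ Subgroup.center G) {n : ℕ} (q : Fin n → G) (p : Fin (n + 1)) (y z : G) (i : ℕ) (hi : i < p) :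
    y * gl φ (List.ofFn (p.insertNth z (cj p y q) : Fin (n + 1) → G)) i =
      gl φ (List.ofFn (p.insertNth (y * z) q : Fin (n + 1) → G)) i := by
  have hl : ((List.ofFn q).take p).length = p := by simp; omega
  rw [ofFn_insertNth, ofFn_insertNth, ofFn_cj]
  rw [List.take_left' (by simpa using hl), List.drop_left' (by simpa using hl)]
  exact glA φ hφ _ _ _ _ _ (by omega)

lemma K4 (hφ : ∀ g : G, φ g ∈ Subgroup.center G) {n : ℕ} (q : Fin n → G) (p : Fin (n + 1)) (y z : G) (i : ℕ) (hi : (p : ℕ) ≤ i) :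
    φ y * gl φ (List.ofFn (p.insertNth z (cj p y q) : Fin (n + 1) → G)) i =
      gl φ (List.ofFn (p.insertNth (y * z) q : Fin (n + 1) → G)) i := by
  have hl : ((List.ofFn q).take p).length = p := by simp; omega
  rw [ofFn_insertNth, ofFn_insertNth, ofFn_cj]
  rw [List.take_left' (by simpa using hl), List.drop_left' (by simpa using hl)]
  exact glB φ hφ _ _ _ _ _ (by omega)

lemma K1 (hφ : ∀ g : G, φ g ∈ Subgroup.center G) {n : ℕ} (q : Fin n → G) (p : Fin (n + 1)) (y : G) (i : ℕ) (hi : i < p) :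
    y * gl φ (List.ofFn (cj p y q)) i =
      gl φ (List.ofFn (p.insertNth y q : Fin (n + 1) → G)) i := by
  have := K3 φ hφ q p y 1 i hi
  rw [mul_one] at this
  rw [← this, ofFn_insertNth, glC _ _ _ _ (by simp; omega), List.take_append_drop]

lemma K2 (hφ : ∀ g : G, φ g ∈ Subgroup.center G) {n : ℕ} (q : Fin n → G) (p : Fin (n + 1)) (y : G) (i : ℕ) (hi : (p : ℕ) ≤ i + 1) :
    φ y * gl φ (List.ofFn (cj p y q)) i =
      gl φ (List.ofFn (p.insertNth y q : Fin (n + 1) → G)) (i + 1) := by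
  have := K4 φ hφ q p y 1 (i + 1) hi
  rw [mul_one] at this
  rw [← this, ofFn_insertNth, glD _ _ _ _ (by simp; omega), List.take_append_drop]


/-- merged faces, with an arbitrary group element -/
def psiC {n : ℕ} (c : (Fin (n + 1) → M) → A) (g : Fin (n + 1) → G) (m : Fin (n + 1) → M) : A :=
  ∑ k ∈ Finset.univ.filter fun k : Fin (n + 1) → Bool => k 0 = false,
    (-1 : ℤ) ^ wt k • c fun i => ract (m i) (gki φ g k i)

lemma wt_insertNth {n : ℕ} (p : Fin (n + 1)) (b : Bool) (k : Fin n → Bool) :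
    wt (p.insertNth b k : Fin (n + 1) → Bool) = (if b then 1 else 0) + wt k := by
  unfold wt
  rw [Fin.sum_univ_succAbove _ p]
  simp

lemma insertNth_zero {n : ℕ} (p : Fin (n + 2)) (hp : p ≠ 0) (b : Bool) (k : Fin (n + 1) → Bool) :
    (p.insertNth b k : Fin (n + 2) → Bool) 0 = k 0 := by
  conv_lhs => rw [← Fin.succAbove_ne_zero_zero hp]
  rw [Fin.insertNth_apply_succAbove]

lemma sum_split {n : ℕ} (p : Fin (n + 2)) (hp : p ≠ 0) (F : (Fin (n + 2) → Bool) → A) :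
    (∑ k ∈ Finset.univ.filter fun k : Fin (n + 2) → Bool => k 0 = false, (-1 : ℤ) ^ wt k • F k) =
    ∑ k ∈ Finset.univ.filter fun k : Fin (n + 1) → Bool => k 0 = false,
      (-1 : ℤ) ^ wt k • (F (p.insertNth false k) - F (p.insertNth true k)) := by
  rw [Finset.sum_filter, Finset.sum_filter,
    ← (Fin.insertNthEquiv (fun _ => Bool) p).sum_comp, Fintype.sum_prod_type]
  have e : ∀ x : Bool × (Fin (n + 1) → Bool), Fin.insertNthEquiv (fun _ => Bool) p x =
    (p.insertNth x.1 x.2 : Fin (n + 2) → Bool) := fun _ => rfl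
  simp only [e, insertNth_zero p hp, wt_insertNth, Fintype.sum_bool]
  rw [← Finset.sum_add_distrib]
  refine Finset.sum_congr rfl fun k _ => ?_
  by_cases h : k 0 = false
  · simp [h, pow_add, smul_sub]
    abel
  · simp [h]

lemma hk_insertNth {n : ℕ} (g : Fin (n + 1) → G) (p : Fin (n + 1)) (b : Bool) (k : Fin n → Bool) :
    hk g (p.insertNth b k) =
      p.insertNth (if b then g p else 1) (hk (fun j => g (p.succAbove j)) k) := by
  funext j
  refine Fin.succAboveCases p ?_ ?_ j
  · simp [hk]
  · intro i; simp [hk]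

lemma hk_dGconj {n : ℕ} (g : Fin (n + 1) → G) (p : Fin (n + 1)) (k : Fin n → Bool) :
    hk (dGconj n p g) k = cj p (g p) (hk (fun j => g (p.succAbove j)) k) := by
  funext j
  simp only [hk, cj, dGconj]
  by_cases h : (j : ℕ) < p
  · rw [Fin.succAbove_of_castSucc_lt _ _ (by simpa [Fin.lt_def] using h)]
    simp only [h, if_true]
    split_ifs <;> simp
  · rw [Fin.succAbove_of_le_castSucc _ _ (by simpa [Fin.le_def] using h)]
    simp only [h, if_false]

lemma cj_one {n : ℕ} (p : ℕ) (q : Fin n → G) : cj p 1 q = q := by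
  funext j; simp [cj]

lemma face_eq (hφ : ∀ g : G, φ g ∈ Subgroup.center G) {n : ℕ} (p : Fin (n + 1)) (hp : p ≠ 0)
    (y : G) (q : Fin n → G) (m : Fin (n + 1) → M) (g : Fin (n + 1) → G) (hg : g p = y) :
    dMmer n p (fun i => ract (m i) (gl φ (List.ofFn (p.insertNth y q : Fin (n + 1) → G)) i)) =
      fun i => ract (dMconj φ n p g m i) (gl φ (List.ofFn (cj p y q)) i) := by
  funext j
  unfold dMmer dMconj
  subst hg
  have hp' : (p : ℕ) ≠ 0 := fun h => hp (Fin.ext h)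
  split_ifs with h1 h2
  · rw [ract_ract, K1 φ hφ _ _ _ _ (by omega)]; rfl
  · rw [ract_add, ract_ract, ract_ract, K1 φ hφ _ _ _ _ (by omega), K2 φ hφ _ _ _ _ (by omega)]
    rfl
  · rw [ract_ract, K2 φ hφ _ _ _ _ (by omega)]
    rfl

lemma dMconj_one {n : ℕ} (p : Fin (n + 1)) (m : Fin (n + 1) → M) (g : Fin (n + 1) → G)
    (hg : g p = 1) : dMconj φ n p g m = dMmer n p m := by
  funext j
  unfold dMmer dMconj
  simp [hg, ract_one]

lemma lemA (hφ : ∀ g : G, φ g ∈ Subgroup.center G) {n : ℕ} (c : (Fin (n + 1) → M) → A)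
    (p : Fin (n + 2)) (hp : p ≠ 0) (g : Fin (n + 2) → G) (m : Fin (n + 2) → M) :
    (∑ k ∈ Finset.univ.filter fun k : Fin (n + 2) → Bool => k 0 = false,
      (-1 : ℤ) ^ wt k • c (dMmer (n + 1) p fun i => ract (m i) (gki φ g k i))) =
    psiC φ c (dGdel (n + 1) p g) (dMmer (n + 1) p m) -
      psiC φ c (dGconj (n + 1) p g) (dMconj φ (n + 1) p g m) := by
  rw [sum_split p hp, psiC, psiC, ← Finset.sum_sub_distrib]
  refine Finset.sum_congr rfl fun k _ => ?_
  rw [← smul_sub]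
  simp only [gki_eq, hk_insertNth, hk_dGconj, if_true]
  rw [face_eq φ hφ p hp (g p) _ m g rfl]
  have := face_eq φ hφ p hp 1 (hk (fun j => g (p.succAbove j)) k) m 1 rfl
  rw [cj_one, dMconj_one _ _ _ _ rfl] at this
  simp only [Bool.false_eq_true, if_false]
  rw [this]
  rfl

section
variable {n : ℕ} (c : (Fin (n + 1) → M) → A)

lemma lemA0 (hφ : ∀ g : G, φ g ∈ Subgroup.center G)
    (hinv : ∀ (m : Fin (n + 1) → M) (g : G), c (fun i => ract (m i) g) = c m)
    (g : Fin (n + 2) → G) (m : Fin (n + 2) → M) :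
    (∑ k ∈ Finset.univ.filter fun k : Fin (n + 2) → Bool => k 0 = false,
      (-1 : ℤ) ^ wt k • c (dMmer (n + 1) 0 fun i => ract (m i) (gki φ g k i))) = 0 := by
  rw [sum_split 1 (by simp)]
  refine Finset.sum_eq_zero fun k _ => ?_
  simp only [gki_eq, hk_insertNth, if_true]
  have e : ∀ y : G, c (dMmer (n + 1) 0 fun i => ract (m i) (gl φ (List.ofFn
      ((1 : Fin (n + 2)).insertNth y (hk (fun j => g (Fin.succAbove 1 j)) k) :
        Fin (n + 2) → G)) i)) = c (fun i => ract (m i.succ) (gl φ (List.ofFn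
          (cj 1 y (hk (fun j => g (Fin.succAbove 1 j)) k))) i)) := by
    intro y
    rw [← hinv (fun i => ract (m i.succ) (gl φ (List.ofFn
          (cj 1 y (hk (fun j => g (Fin.succAbove 1 j)) k))) i)) (φ y)]
    congr 1
    funext i
    simp only [dMmer, ract_ract]
    have := K2 φ hφ (hk (fun j => g (Fin.succAbove 1 j)) k) 1 y i (by simp)
    simp only [Fin.val_one] at this
    simp only [Fin.val_zero, Nat.not_lt_zero, if_false, Nat.succ_ne_zero]
    rw [Fin.val_succ, ← this, phi_comm φ hφ y (gl _ _ _)]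
  have h0 : ∀ y : G, k 0 = false → cj 1 y (hk (fun j => g (Fin.succAbove 1 j)) k) =
      hk (fun j => g (Fin.succAbove 1 j)) k := by
    intro y hk0
    funext j
    unfold cj
    split_ifs with h
    · have : j = 0 := Fin.ext (by simpa using h)
      subst this
      simp [hk, hk0]
    · rfl
  rw [e, e, h0, h0]
  · simp
  all_goals simp_all

lemma lemAlast
    (hinv : ∀ (m : Fin (n + 1) → M) (g : G), c (fun i => ract (m i) g) = c m)
    (g : Fin (n + 2) → G) (m : Fin (n + 2) → M) :
    (∑ k ∈ Finset.univ.filter fun k : Fin (n + 2) → Bool => k 0 = false,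
      (-1 : ℤ) ^ wt k • c (fun j => ract (m j.castSucc) (gki φ g k j.castSucc))) = 0 := by
  rw [sum_split (Fin.last _) (by simp)]
  refine Finset.sum_eq_zero fun k _ => ?_
  simp only [gki_eq, hk_insertNth, if_true]
  have e : ∀ y : G, c (fun i => ract (m i.castSucc) (gl φ (List.ofFn
      ((Fin.last (n + 1)).insertNth y (hk (fun j => g (Fin.succAbove (Fin.last (n + 1)) j)) k) :
        Fin (n + 2) → G)) (i.castSucc : Fin (n + 2)))) = c (fun i => ract (m i.castSucc) (gl φ (List.ofFn
          (hk (fun j => g (Fin.succAbove (Fin.last (n + 1)) j)) k)) i)) := by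
    intro y
    rw [← hinv (fun i => ract (m i.castSucc) (gl φ (List.ofFn
          (hk (fun j => g (Fin.succAbove (Fin.last (n + 1)) j)) k)) i)) y]
    congr 1
    funext i
    rw [ract_ract, ofFn_insertNth]
    congr 1
    unfold gl
    rw [List.take_of_length_le (i := (Fin.last (n + 1) : ℕ)) (by simp),
      List.drop_of_length_le (i := (Fin.last (n + 1) : ℕ)) (by simp)]
    rw [List.take_append_of_le_length (by simp; omega), List.drop_append_of_le_length (by simp; omega)]
    simp [mul_assoc]
  rw [e, e]
  simp

lemma psiC_zero_face (hφ : ∀ g : G, φ g ∈ Subgroup.center G)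
    (hinv : ∀ (m : Fin (n + 1) → M) (g : G), c (fun i => ract (m i) g) = c m)
    (g : Fin (n + 1) → G) (m : Fin (n + 1) → M) (y : G) :
    psiC φ c g (fun i => ract (m i) (φ y)) = psiC φ c g m := by
  unfold psiC
  refine Finset.sum_congr rfl fun k _ => ?_
  congr 1
  conv_rhs => rw [← hinv _ (φ y)]
  congr 1
  funext i
  rw [ract_ract, ract_ract, phi_comm φ hφ]

lemma psiC_congr_zero (g g' : Fin (n + 1) → G) (m : Fin (n + 1) → M)
    (h : ∀ i, i ≠ 0 → g i = g' i) :
    psiC φ c g m = psiC φ c g' m := by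
  unfold psiC
  refine Finset.sum_congr rfl fun k hk0 => ?_
  have : hk g k = hk g' k := by
    funext i
    unfold hk
    by_cases hi : i = 0
    · subst hi
      simp at hk0
      simp [hk0]
    · rw [h i hi]
  simp only [gki_eq, this]

/-- all singletons -/
lemma caseA (hφ : ∀ g : G, φ g ∈ Subgroup.center G)
    (hinv : ∀ (m : Fin (n + 1) → M) (g : G), c (fun i => ract (m i) g) = c m)
    (hcoc : ∀ m : Fin (n + 2) → M,
      (∑ p : Fin (n + 2), (-1 : ℤ) ^ (p : ℕ) • c (dMmer (n + 1) p m)) +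
        (-1 : ℤ) ^ (n + 2) • c (fun j => m j.castSucc) = 0)
    (g : Fin (n + 2) → G) (m : Fin (n + 2) → M) :
    ∑ p : Fin (n + 1), (-1 : ℤ) ^ (p.succ : ℕ) •
      (psiC φ c (dGdel (n + 1) p.succ g) (dMmer (n + 1) p.succ m) -
      psiC φ c (dGconj (n + 1) p.succ g) (dMconj φ (n + 1) p.succ g m)) = 0 := by
  have key : ∑ k ∈ Finset.univ.filter fun k : Fin (n + 2) → Bool => k 0 = false,
      (-1 : ℤ) ^ wt k • ((∑ p : Fin (n + 2), (-1 : ℤ) ^ (p : ℕ) •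
        c (dMmer (n + 1) p fun i => ract (m i) (gki φ g k i))) +
        (-1 : ℤ) ^ (n + 2) • c (fun j => ract (m j.castSucc) (gki φ g k j.castSucc))) = 0 :=
    Finset.sum_eq_zero fun k _ => by rw [hcoc (fun i => ract (m i) (gki φ g k i)), smul_zero]
  simp only [smul_add, Finset.sum_add_distrib, Finset.smul_sum] at key
  simp only [smul_comm ((-1 : ℤ) ^ wt _) ((-1 : ℤ) ^ (_ : ℕ))] at key
  rw [Finset.sum_comm] at key
  simp only [← Finset.smul_sum] at key
  rw [lemAlast φ c hinv, smul_zero, add_zero, Fin.sum_univ_succ, lemA0 φ c hφ hinv, smul_zero,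
    zero_add] at key
  rw [← key]
  refine Finset.sum_congr rfl fun p _ => ?_
  rw [lemA φ hφ c p.succ (Fin.succ_ne_zero p)]

lemma caseB (hφ : ∀ g : G, φ g ∈ Subgroup.center G)
    (p : Fin (n + 1)) (hp : p ≠ 0) (g : Fin (n + 1) → G) (m : Fin (n + 1) → M) (h : G) :
    psiC φ c (fun j => if j < p then (g p)⁻¹ * g j * g p else if j = p then (g p)⁻¹ * h else g j)
      (fun j => if j < p then ract (m j) (g p) else ract (m j) (φ (g p))) -
    psiC φ c (Function.update g p h) m + psiC φ c g m = 0 := by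
  obtain _ | n := n
  · exact absurd (Fin.ext (by omega)) hp
  unfold psiC
  rw [sum_split p hp, sum_split p hp, sum_split p hp, ← Finset.sum_sub_distrib,
    ← Finset.sum_add_distrib]
  refine Finset.sum_eq_zero fun k _ => ?_
  rw [← smul_sub, ← smul_add]
  simp only [gki_eq, hk_insertNth, if_true, Bool.false_eq_true, if_false, lt_self_iff_false,
    Function.update_self]
  have e1 : (fun j => Function.update g p h (p.succAbove j)) = fun j => g (p.succAbove j) := by
    funext j; simp [Function.update_of_ne, Fin.succAbove_ne]
  have e2 : hk (fun j => if p.succAbove j < p then (g p)⁻¹ * g (p.succAbove j) * g p else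
      if p.succAbove j = p then (g p)⁻¹ * h else g (p.succAbove j)) k =
      cj p (g p) (hk (fun j => g (p.succAbove j)) k) := by
    funext j
    unfold hk cj
    have : p.succAbove j < p ↔ (j : ℕ) < p := by
      rw [Fin.succAbove_lt_iff_castSucc_lt]; rfl
    simp only [this, Fin.succAbove_ne, if_false]
    split_ifs <;> simp
  rw [e1, e2]
  have e3 : ∀ z : G, (fun i => ract (if i < p then ract (m i) (g p) else ract (m i) (φ (g p)))
      (gl φ (List.ofFn (p.insertNth z (cj p (g p) (hk (fun j => g (p.succAbove j)) k)) :
        Fin (n + 2) → G)) i)) = fun i => ract (m i) (gl φ (List.ofFn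
          (p.insertNth (g p * z) (hk (fun j => g (p.succAbove j)) k) : Fin (n + 2) → G)) i) := by
    intro z
    funext i
    split_ifs with hi
    · rw [ract_ract, K3 φ hφ _ _ _ _ _ hi]
    · rw [ract_ract, K4 φ hφ _ _ _ _ _ (not_lt.1 hi)]
  rw [e3, e3]
  simp

end

/-- differences -/
def gm {n : ℕ} (x : Fin n → M × G) : Fin n → M :=
  fun j => (x j).1 - if h : (j : ℕ) + 1 < n then (x ⟨(j : ℕ) + 1, h⟩).1 else 0

/-- the cocycle on tuples -/
noncomputable def FF (lam : G → A) {n : ℕ} (c : (Fin (n + 1) → M) → A)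
    (x : Fin (n + 1) → M × G) : TensorProduct ℤ A A :=
  psiC φ c (fun j => (x j).2) (gm x) ⊗ₜ[ℤ] lam (x 0).2

lemma succAbove_mk_lt {n : ℕ} (p : Fin (n + 1)) (j : Fin n) (h : (j : ℕ) < p) :
    p.succAbove j = j.castSucc :=
  Fin.succAbove_of_castSucc_lt _ _ (by simpa [Fin.lt_def] using h)

lemma succAbove_mk_ge {n : ℕ} (p : Fin (n + 1)) (j : Fin n) (h : ¬ (j : ℕ) < p) :
    p.succAbove j = j.succ :=
  Fin.succAbove_of_le_castSucc _ _ (by simpa [Fin.le_def] using h)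

lemma gm_conj {n : ℕ} (x : Fin (n + 1) → M × G) (p : Fin (n + 1)) :
    gm (fun j : Fin n => if (j : ℕ) < (p : ℕ) then under φ (x j.castSucc) (x p)
            else GAlex.over φ (x j.succ) (x p)) = dMconj φ n p (fun j => (x j).2) (gm x) := by
  funext j
  unfold gm dMconj
  have hj := j.2
  rcases lt_trichotomy ((j : ℕ) + 1) p with h | h | h
  · have h1 : (j : ℕ) + 1 < n := by omega
    have h0 : (j : ℕ) < p := by omega
    have h2 : (j : ℕ) + 1 < n + 1 := by omega
    simp [h0, h, h1, under, ract_sub]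
  · have h0 : (j : ℕ) < p := by omega
    have h3 : ¬ (j : ℕ) + 1 < p := by omega
    have hp : p = j.succ := Fin.ext h.symm
    subst hp
    by_cases h1 : (j : ℕ) + 1 < n
    · simp [h1, under, GAlex.over, ract_sub, Fin.succ]
      abel
    · simp [h1, under, GAlex.over, ract_sub, Fin.succ]
      abel
  · have h0 : ¬ (j : ℕ) < p := by omega
    have h3 : ¬ (j : ℕ) + 1 < p := by omega
    have h4 : ¬ (j : ℕ) + 1 = p := by omega
    by_cases h1 : (j : ℕ) + 1 < n
    · simp [h1, h0, h3, h4, GAlex.over, ract_sub, Fin.succ]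
    · simp [h1, h0, h3, h4, GAlex.over, ract_sub, Fin.succ]

lemma gm_del {n : ℕ} (x : Fin (n + 1) → M × G) (p : Fin (n + 1)) :
    gm (fun j : Fin n => x (p.succAbove j)) = dMmer n p (gm x) := by
  have e : (fun j : Fin n => x (p.succAbove j)) =
      fun j : Fin n => if (j : ℕ) < p then x j.castSucc else x j.succ := by
    funext j
    split_ifs with h
    · rw [succAbove_mk_lt _ _ h]
    · rw [succAbove_mk_ge _ _ h]
  rw [e]
  funext j
  unfold gm dMmer
  have hj := j.2
  rcases lt_trichotomy ((j : ℕ) + 1) p with h | h | h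
  · have h1 : (j : ℕ) + 1 < n := by omega
    have h0 : (j : ℕ) < p := by omega
    have h2 : (j : ℕ) + 1 < n + 1 := by omega
    simp [h0, h, h1]
  · have h0 : (j : ℕ) < p := by omega
    have h3 : ¬ (j : ℕ) + 1 < p := by omega
    have hp : p = j.succ := Fin.ext h.symm
    subst hp
    by_cases h1 : (j : ℕ) + 1 < n
    · simp [h1, Fin.succ]
    · simp [h1, Fin.succ]
  · have h0 : ¬ (j : ℕ) < p := by omega
    have h3 : ¬ (j : ℕ) + 1 < p := by omega
    have h4 : ¬ (j : ℕ) + 1 = p := by omega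
    by_cases h1 : (j : ℕ) + 1 < n
    · simp [h1, h0, h3, h4, Fin.succ]
    · simp [h1, h0, h3, h4, Fin.succ]

lemma lam_conj (lam : G → A) (hlam : ∀ g h : G, lam (g * h) = lam g + lam h) (g h : G) :
    lam (h⁻¹ * g * h) = lam g := by
  have h1 : lam 1 = 0 := by simpa using hlam 1 1
  have h2 : lam (h⁻¹) + lam h = 0 := by rw [← hlam]; simpa using h1
  rw [hlam, hlam, add_right_comm, h2, zero_add]

lemma FF_A (hφ : ∀ g : G, φ g ∈ Subgroup.center G)
    (lam : G → A) (hlam : ∀ g h : G, lam (g * h) = lam g + lam h) {n : ℕ}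
    (c : (Fin (n + 1) → M) → A)
    (hinv : ∀ (m : Fin (n + 1) → M) (g : G), c (fun i => ract (m i) g) = c m)
    (hcoc : ∀ m : Fin (n + 2) → M,
      (∑ p : Fin (n + 2), (-1 : ℤ) ^ (p : ℕ) • c (dMmer (n + 1) p m)) +
        (-1 : ℤ) ^ (n + 2) • c (fun j => m j.castSucc) = 0)
    (x : Fin (n + 2) → M × G) :
    ∑ p : Fin (n + 2), (-1 : ℤ) ^ (p : ℕ) •
      (FF φ lam c (fun j => x (p.succAbove j)) -
        FF φ lam c (fun j => if (j : ℕ) < (p : ℕ) then under φ (x j.castSucc) (x p)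
            else GAlex.over φ (x j.succ) (x p))) = 0 := by
  have hG : ∀ p : Fin (n + 2), (fun j : Fin (n + 1) =>
      (if (j : ℕ) < (p : ℕ) then under φ (x j.castSucc) (x p)
            else GAlex.over φ (x j.succ) (x p)).2) = dGconj (n + 1) p (fun j => (x j).2) := by
    intro p
    funext j
    unfold dGconj
    split_ifs <;> rfl
  rw [Fin.sum_univ_succ]
  have h0 : FF φ lam c (fun j => x ((0 : Fin (n + 2)).succAbove j)) -
        FF φ lam c (fun j => if (j : ℕ) < ((0 : Fin (n + 2)) : ℕ) then under φ (x j.castSucc) (x 0)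
            else GAlex.over φ (x j.succ) (x 0)) = 0 := by
    rw [sub_eq_zero]
    unfold FF
    rw [gm_conj, gm_del]
    congr 1
    have : dMconj φ (n + 1) 0 (fun j => (x j).2) (gm x) =
        fun i => ract (dMmer (n + 1) 0 (gm x) i) (φ (x 0).2) := by
      funext j
      simp [dMconj, dMmer]
    rw [this, psiC_zero_face φ c hφ hinv]
    rfl
  rw [h0, smul_zero, zero_add]
  have := congrArg (fun a : A => a ⊗ₜ[ℤ] lam (x 0).2)
    (caseA φ c hφ hinv hcoc (fun j => (x j).2) (gm x))
  simp only [TensorProduct.zero_tmul, TensorProduct.sum_tmul] at this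
  rw [← this]
  refine Finset.sum_congr rfl fun p _ => ?_
  unfold FF
  rw [gm_conj, gm_del, hG]
  rw [← TensorProduct.smul_tmul', TensorProduct.sub_tmul]
  congr 2
  congr 1
  simp [under, lam_conj lam hlam]

lemma FF_B (hφ : ∀ g : G, φ g ∈ Subgroup.center G)
    (lam : G → A) (hlam : ∀ g h : G, lam (g * h) = lam g + lam h) {n : ℕ}
    (c : (Fin (n + 1) → M) → A)
    (hinv : ∀ (m : Fin (n + 1) → M) (g : G), c (fun i => ract (m i) g) = c m)
    (x : Fin (n + 1) → M × G) (p : Fin (n + 1)) (h : G) :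
    FF φ lam c (fun j => if j < p then under φ (x j) (x p) else
        if j = p then (ract (x p).1 (φ (x p).2), (x p).2⁻¹ * h) else GAlex.over φ (x j) (x p)) -
      FF φ lam c (Function.update x p ((x p).1, h)) + FF φ lam c x = 0 := by
  have g1 : gm (fun j => if j < p then under φ (x j) (x p) else
        if j = p then (ract (x p).1 (φ (x p).2), (x p).2⁻¹ * h) else GAlex.over φ (x j) (x p)) =
      fun j => if j < p then ract (gm x j) (x p).2 else ract (gm x j) (φ (x p).2) := by
    have e : (fun j => if j < p then under φ (x j) (x p) else
        if j = p then (ract (x p).1 (φ (x p).2), (x p).2⁻¹ * h) else GAlex.over φ (x j) (x p)) =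
        fun j : Fin (n + 1) => (if (j : ℕ) < p then ract (x j).1 (x p).2 + ract (x p).1 (φ (x p).2) -
          ract (x p).1 (x p).2 else ract (x j).1 (φ (x p).2), if j < p then (under φ (x j) (x p)).2
            else if j = p then (x p).2⁻¹ * h else (x j).2) := by
      funext j
      simp only [Fin.lt_def]
      split_ifs with h1 h2
      · rfl
      · rw [h2]
      · rfl
    rw [e]
    funext j
    unfold gm
    simp only [Fin.lt_def]
    rcases lt_trichotomy ((j : ℕ) + 1) p with h | h | h
    · have h0 : (j : ℕ) < p := by omega
      have h1 : (j : ℕ) + 1 < n + 1 := by omega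
      simp only [h, h0, h1, if_true, dif_pos, ract_sub]
      abel
    · have h0 : (j : ℕ) < p := by omega
      have h3 : ¬ (j : ℕ) + 1 < p := by omega
      have hp : p = ⟨(j : ℕ) + 1, by omega⟩ := Fin.ext h.symm
      have h1 : (j : ℕ) + 1 < n + 1 := by omega
      simp only [h3, h0, h1, if_true, if_false, dif_pos, ract_sub, ← hp]
      abel
    · have h0 : ¬ (j : ℕ) < p := by omega
      have h3 : ¬ (j : ℕ) + 1 < p := by omega
      by_cases h1 : (j : ℕ) + 1 < n + 1
      · simp only [h3, h0, h1, if_false, dif_pos, ract_sub]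
      · simp only [h0, h1, if_false, dite_false, ract_sub, ract_zero]
  have g2 : gm (Function.update x p ((x p).1, h)) = gm x := by
    have : ∀ j, (Function.update x p ((x p).1, h) j).1 = (x j).1 := by
      intro j
      by_cases hj : j = p
      · subst hj; simp
      · simp [hj]
    funext j
    simp only [gm, this]
  have g3 : (fun j => (if j < p then under φ (x j) (x p) else
        if j = p then (ract (x p).1 (φ (x p).2), (x p).2⁻¹ * h) else
          GAlex.over φ (x j) (x p)).2) =
      fun j => if j < p then (x p).2⁻¹ * (x j).2 * (x p).2 else
        if j = p then (x p).2⁻¹ * h else (x j).2 := by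
    funext j
    split_ifs <;> rfl
  have g4 : (fun j => (Function.update x p ((x p).1, h) j).2) =
      Function.update (fun j => (x j).2) p h := by
    funext j
    by_cases hj : j = p
    · subst hj; simp
    · simp [hj]
  unfold FF
  rw [g1, g2, g3, g4]
  by_cases hp : p = 0
  · subst hp
    have e1 : psiC φ c (fun j => if j < 0 then (x 0).2⁻¹ * (x j).2 * (x 0).2 else
        if j = 0 then (x 0).2⁻¹ * h else (x j).2)
        (fun j => if j < 0 then ract (gm x j) (x 0).2 else ract (gm x j) (φ (x 0).2)) =
        psiC φ c (fun j => (x j).2) (gm x) := by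
      simp only [Fin.not_lt_zero, if_false]
      rw [psiC_zero_face φ c hφ hinv]
      apply psiC_congr_zero
      intro i hi
      simp [hi]
    have e2 : psiC φ c (Function.update (fun j => (x j).2) 0 h) (gm x) =
        psiC φ c (fun j => (x j).2) (gm x) := by
      apply psiC_congr_zero
      intro i hi
      simp [hi]
    rw [e1, e2, ← TensorProduct.tmul_sub, ← TensorProduct.tmul_add]
    have : lam h = lam (x 0).2 + lam ((x 0).2⁻¹ * h) := by rw [← hlam]; simp
    simp [this]
  · have hp0 : 0 < p := Fin.pos_iff_ne_zero.2 hp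
    have hB := caseB φ c hφ p hp (fun j => (x j).2) (gm x) h
    simp only [hp0, if_true, Function.update_of_ne (Ne.symm hp), under, lam_conj lam hlam]
    rw [← TensorProduct.sub_tmul, ← TensorProduct.add_tmul]
    rw [hB, TensorProduct.zero_tmul]

section words
variable (lam : G → A) (n : ℕ) (f : CgpG (G := G) (M := M) (n + 1) →+ A)

/-- the associated function on tuples -/
def cf (m : Fin (n + 1) → M) : A :=
  f (QuotientAddGroup.mk' (coinvSub (G := G) (M := M) (n + 1)) (FreeAbelianGroup.of m))

lemma f_psiVal (g : Fin (n + 1) → G) (m : Fin (n + 1) → M) :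
    f (QuotientAddGroup.mk' (coinvSub (G := G) (M := M) (n + 1)) (psiVal φ n (g, m))) =
      psiC φ (cf n f) g m := by
  unfold psiVal psiC cf
  simp only [map_sum, map_zsmul]

lemma Phi_sg (w : List (M × G × List G)) (x : Fin (n + 1) → M × G)
    (hw : w = List.ofFn fun i => ((x i).1, (x i).2, ([] : List G))) :
    PhiFLam φ lam n f (FreeAbelianGroup.of w) = FF φ lam (cf n f) x := by
  subst hw
  unfold PhiFLam projP gammaMap psiLam
  simp only [AddMonoidHom.comp_apply, FreeAbelianGroup.lift_apply_of]
  rw [dif_pos (by simp [List.mem_ofFn])]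
  simp only [FreeAbelianGroup.lift_apply_of, List.getElem_ofFn]
  unfold FF
  rw [← f_psiVal]
  rfl

lemma Phi_zero (w : List (M × G × List G)) (hw : ¬ ∀ b ∈ w, b.2.2 = []) :
    PhiFLam φ lam n f (FreeAbelianGroup.of w) = 0 := by
  unfold PhiFLam projP
  simp only [AddMonoidHom.comp_apply, FreeAbelianGroup.lift_apply_of]
  rw [dif_neg]
  · simp
  · rintro ⟨_, h⟩
    exact hw fun b hb => by simpa using h b hb

lemma cf_inv (m : Fin (n + 1) → M) (g : G) : cf n f (fun i => ract (m i) g) = cf n f m := by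
  unfold cf
  congr 1
  rw [← sub_eq_zero, ← map_sub, QuotientAddGroup.mk'_apply, QuotientAddGroup.eq_zero_iff]
  exact AddSubgroup.subset_closure ⟨m, g, rfl⟩

lemma cf_coc (hf : f.comp ((QuotientAddGroup.mk' (coinvSub (G := G) (M := M) (n + 1))).comp
          (dgp (M := M) (n + 1))) = 0) (m : Fin (n + 2) → M) :
      (∑ p : Fin (n + 2), (-1 : ℤ) ^ (p : ℕ) • cf n f (dMmer (n + 1) p m)) +
        (-1 : ℤ) ^ (n + 2) • cf n f (fun j => m j.castSucc) = 0 := by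
  have := DFunLike.congr_fun hf (FreeAbelianGroup.of m)
  simp only [AddMonoidHom.comp_apply, dgp, FreeAbelianGroup.lift_apply_of, map_add, map_sum,
    map_zsmul, AddMonoidHom.zero_apply] at this
  exact this

lemma cf_norm (hf : ∀ z ∈ DgpGsub (G := G) (M := M) (n + 1), f z = 0) (m : Fin (n + 1) → M)
    (i : Fin (n + 1)) (hi : (i : ℕ) + 1 < n + 1) (hm : m i = 0) : cf n f m = 0 := by
  apply hf
  exact ⟨_, AddSubgroup.subset_closure ⟨m, i, hi, hm, rfl⟩, rfl⟩

/-- a word with only singleton blocks comes from a tuple -/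
lemma exists_tuple {N : ℕ} (w : List (M × G × List G)) (hw : ∀ b ∈ w, b.2.2 = [])
    (hl : w.length = N) :
    ∃ x : Fin N → M × G, w = List.ofFn fun i => ((x i).1, (x i).2, ([] : List G)) := by
  subst hl
  refine ⟨fun i => ((w[i]).1, (w[i]).2.1), ?_⟩
  apply List.ext_getElem
  · simp
  · intro j h1 h2
    have := hw _ (List.getElem_mem h1)
    simp only [List.getElem_ofFn, Fin.getElem_fin]
    exact Prod.ext rfl (Prod.ext rfl this)

lemma lenW_sg (w : List (M × G × List G)) (hw : ∀ b ∈ w, b.2.2 = []) : lenW w = w.length := by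
  induction w with
  | nil => rfl
  | cons a w ih =>
    have := ih fun b hb => hw b (List.mem_cons_of_mem _ hb)
    simp [lenW] at this ⊢
    rw [this, hw a (by simp)]
    simp [add_comm]

/-- partial D statement -/
lemma partD (hf : ∀ z ∈ DgpGsub (G := G) (M := M) (n + 1), f z = 0) :
    ∀ z ∈ Dsub (G := G) (M := M) (n + 1), PhiFLam φ lam n f z = 0 := by
  intro z hz
  suffices h : Dsub (G := G) (M := M) (n + 1) ≤ (PhiFLam φ lam n f).ker from h hz
  unfold Dsub
  rw [AddSubgroup.closure_le]
  rintro _ ⟨w₁, w₂, m, g, gs, h, hs, hl, rfl⟩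
  show _ = _
  rw [map_sub]
  have h2 : PhiFLam φ lam n f (mergeExpand m (g :: gs) (h :: hs) w₁ w₂) = 0 := by
    unfold mergeExpand
    rw [map_sum]
    refine Finset.sum_eq_zero fun T _ => ?_
    rw [map_zsmul, Phi_zero, smul_zero]
    intro hall
    have := congrArg List.length (hall _ (List.mem_append_right _ (List.mem_cons_self)))
    simp at this
  rw [h2, sub_zero]
  by_cases hall : ∀ b ∈ w₁ ++ (m, g, gs) :: (m, h, hs) :: w₂, b.2.2 = []
  · rw [lenW_sg _ hall] at hl
    obtain ⟨x, hx⟩ := exists_tuple _ hall hl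
    rw [Phi_sg φ lam n f _ x hx]
    have hlen : w₁.length + 1 < n + 1 := by
      rw [← hl]; simp
    have x1 : (x ⟨w₁.length, by omega⟩).1 = m := by
      have := congrArg (fun l => (l[w₁.length]?).map Prod.fst) hx
      simpa [List.getElem?_ofFn, -List.ofFn_succ, hlen, (by omega : w₁.length < n + 1)] using this.symm
    have x2 : (x ⟨w₁.length + 1, by omega⟩).1 = m := by
      have := congrArg (fun l => (l[w₁.length + 1]?).map Prod.fst) hx
      simpa [List.getElem?_ofFn, -List.ofFn_succ, hlen] using this.symm
    unfold FF
    have : psiC φ (cf n f) (fun j => (x j).2) (gm x) = 0 := by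
      unfold psiC
      refine Finset.sum_eq_zero fun k _ => ?_
      rw [cf_norm n f hf _ ⟨w₁.length, by omega⟩ hlen, smul_zero]
      have : gm x ⟨w₁.length, by omega⟩ = 0 := by
        simp only [gm, hlen, dif_pos, x1, x2, sub_self]
      rw [this, ract_zero]
    rw [this, TensorProduct.zero_tmul]
  · exact Phi_zero _ _ _ _ _ hall

/-- one summand of the boundary -/
def dterm (w : List (M × G × List G)) (i : ℕ) (b : M × G × List G) :
    FreeAbelianGroup (List (M × G × List G)) :=
  (-1 : ℤ) ^ lenW (w.take i) •
        (FreeAbelianGroup.of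
            ((w.take i).map (fun c => underB φ c (b.1, b.2.1)) ++ tildeB φ b ++
              (w.drop (i + 1)).map fun c => overB φ c (b.1, b.2.1)) +
          ∑ j ∈ Finset.range (b.2.2.length + 1),
            (-1 : ℤ) ^ (j + 1) •
              FreeAbelianGroup.of
                (w.take i ++ blockOfList b.1 ((b.2.1 :: b.2.2).eraseIdx j) ++
                  w.drop (i + 1)))

lemma dPval_eq (w : List (M × G × List G)) :
    dPval φ w = ∑ i : Fin w.length, dterm φ w i (w[i]) := by
  unfold dPval
  refine Finset.sum_bij (fun i _ => ⟨i.1, Finset.mem_range.1 i.2⟩) ?_ ?_ ?_ ?_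
  · intro i _
    exact Finset.mem_univ _
  · intro i _ j _ h
    exact Subtype.ext (Fin.mk.inj h)
  · intro j _
    exact ⟨⟨j.1, Finset.mem_range.2 j.2⟩, Finset.mem_attach _ _, rfl⟩
  · intro i _
    rfl

lemma dterm_zero1 (w : List (M × G × List G)) (i : ℕ) (b : M × G × List G)
    (hw : ¬ ∀ c ∈ w.take i ++ w.drop (i + 1), c.2.2 = []) :
    PhiFLam φ lam n f (dterm φ w i b) = 0 := by
  unfold dterm
  rw [map_zsmul, map_add, map_sum, Phi_zero, zero_add, Finset.sum_eq_zero, smul_zero]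
  · intro j _
    rw [map_zsmul, Phi_zero, smul_zero]
    intro h
    apply hw
    intro c hc
    apply h
    simp only [List.mem_append] at hc ⊢
    tauto
  · intro h
    apply hw
    intro c hc
    simp only [List.mem_append] at hc
    rcases hc with hc | hc
    · have := h (underB φ c (b.1, b.2.1)) (by
        simp only [List.mem_append, List.mem_map]
        exact Or.inl (Or.inl ⟨c, hc, rfl⟩))
      simpa [underB] using this
    · exact h (overB φ c (b.1, b.2.1)) (by
        simp only [List.mem_append, List.mem_map]
        exact Or.inr ⟨c, hc, rfl⟩)

lemma dterm_zero2 (w : List (M × G × List G)) (i : ℕ) (b : M × G × List G)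
    (hb : 2 ≤ b.2.2.length) :
    PhiFLam φ lam n f (dterm φ w i b) = 0 := by
  obtain ⟨m, g, _ | ⟨h, _ | ⟨h', t⟩⟩⟩ := b
  · simp at hb
  · simp at hb
  unfold dterm
  rw [map_zsmul, map_add, map_sum, Phi_zero, zero_add, Finset.sum_eq_zero, smul_zero]
  · intro j _
    rw [map_zsmul, Phi_zero, smul_zero]
    intro hh
    obtain ⟨a, l, hal, hl⟩ : ∃ a l, (g :: h :: h' :: t).eraseIdx j = a :: l ∧ l ≠ [] := by
      rcases j with _ | _ | j
      · exact ⟨_, _, rfl, by simp⟩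
      · exact ⟨_, _, rfl, by simp⟩
      · exact ⟨_, _, rfl, by simp⟩
    refine hl (hh (m, a, l) ?_)
    simp [hal, blockOfList]
  · intro hh
    have := hh (ract m (φ g), g⁻¹ * h, (h' :: t).map fun x => g⁻¹ * x) (by simp [tildeB])
    simp at this

/-- all singletons -/
lemma wordA (hφ : ∀ g : G, φ g ∈ Subgroup.center G)
    (hlam : ∀ g h : G, lam (g * h) = lam g + lam h)
    (hf : f.comp ((QuotientAddGroup.mk' (coinvSub (G := G) (M := M) (n + 1))).comp
          (dgp (M := M) (n + 1))) = 0)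
    (x : Fin (n + 2) → M × G) :
    PhiFLam φ lam n f (dPval φ (List.ofFn fun i => ((x i).1, (x i).2, ([] : List G)))) = 0 := by
  obtain ⟨w, hw⟩ : ∃ w : List (M × G × List G),
    w = List.ofFn fun i => ((x i).1, (x i).2, ([] : List G)) := ⟨_, rfl⟩
  rw [← hw]
  have hwl : w.length = n + 2 := by rw [hw, List.length_ofFn]
  have hget : ∀ j (hj : j < w.length), w[j] = ((x ⟨j, by omega⟩).1, (x ⟨j, by omega⟩).2, []) := by
    intro j hj
    simp only [hw, List.getElem_ofFn]
  rw [dPval_eq, map_sum]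
  rw [← (finCongr hwl).symm.sum_comp]
  have := FF_A φ hφ lam hlam (cf n f) (cf_inv n f) (cf_coc n f hf) x
  rw [← neg_eq_zero, ← Finset.sum_neg_distrib] at this
  rw [← this]
  refine Finset.sum_congr rfl fun p _ => ?_
  have hwp : w[(finCongr hwl).symm p] = ((x p).1, (x p).2, ([] : List G)) := by
    simp [hget]
  have hall : ∀ b ∈ w, b.2.2 = [] := by
    intro b hb
    rw [hw, List.mem_ofFn] at hb
    obtain ⟨i, rfl⟩ := hb
    rfl
  rw [hwp]
  simp only [finCongr_symm, finCongr_apply, Fin.val_cast]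
  unfold dterm
  rw [lenW_sg _ (fun b hb => hall b (List.mem_of_mem_take hb))]
  have hl : (w.take p).length = p := by simp [hwl]
  rw [hl, map_zsmul, ← smul_neg]
  congr 1
  rw [map_add]
  simp only [List.length_nil, zero_add, Finset.sum_range_one, List.eraseIdx_zero, List.tail_cons,
    blockOfList, tildeB, List.append_nil, pow_one]
  rw [map_zsmul, Phi_sg φ lam n f (List.take (↑p) w ++ List.drop (↑p + 1) w)
    (fun j => x (p.succAbove j)), Phi_sg φ lam n f _
    (fun j => if (j : ℕ) < (p : ℕ) then under φ (x j.castSucc) (x p)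
            else GAlex.over φ (x j.succ) (x p))]
  · simp
    abel
  · apply List.ext_getElem
    · simp [hwl]; omega
    · intro j h1 h2
      simp at h2
      simp only [List.getElem_ofFn]
      by_cases h : j < p
      · rw [List.getElem_append_left (by simp [hwl]; omega)]
        simp [hget, h, underB, under]
      · rw [List.getElem_append_right (by simp [hwl]; omega)]
        have e' : (p : ℕ) + 1 + (j - min (p : ℕ) w.length) = j + 1 := by omega
        simp [hget, h, overB, GAlex.over, e']
  · apply List.ext_getElem
    · simp [hwl]; omega
    · intro j h1 h2
      simp at h2
      simp only [List.getElem_ofFn]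
      by_cases h : j < p
      · rw [List.getElem_append_left (by simp [hwl]; omega), succAbove_mk_lt _ _ h]
        simp [hget]
      · rw [List.getElem_append_right (by simp [hwl]; omega), succAbove_mk_ge _ _ h]
        have e' : (p : ℕ) + 1 + (j - min (p : ℕ) w.length) = j + 1 := by omega
        simp [hget, e']

/-- one block of length two -/
lemma wordB (hφ : ∀ g : G, φ g ∈ Subgroup.center G)
    (hlam : ∀ g h : G, lam (g * h) = lam g + lam h)
    (w : List (M × G × List G)) (hl : w.length = n + 1) (i : ℕ) (m : M) (g h : G)
    (hi : i < w.length) (hwi : w[i] = (m, g, [h]))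
    (hall : ∀ c ∈ w.take i ++ w.drop (i + 1), c.2.2 = []) :
    PhiFLam φ lam n f (dterm φ w i (m, g, [h])) = 0 := by
  let p : Fin (n + 1) := ⟨i, by omega⟩
  let x : Fin (n + 1) → M × G := fun j => ((w[(j : ℕ)]).1, (w[(j : ℕ)]).2.1)
  have hxp : x p = (m, g) := by simp [x, p, hwi]
  have hlt : (w.take i).length = i := by simp; omega
  have hw1 : ∀ j (hj : j < w.length), j ≠ i → w[j] = ((w[j]).1, (w[j]).2.1, []) := by
    intro j hj hji
    have : (w[j]).2.2 = [] := by
      apply hall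
      rcases lt_or_gt_of_ne hji with h | h
      · apply List.mem_append_left
        rw [List.mem_iff_getElem]
        exact ⟨j, by simp; omega, by simp⟩
      · apply List.mem_append_right
        rw [List.mem_iff_getElem]
        refine ⟨j - (i + 1), by simp; omega, ?_⟩
        simp only [List.getElem_drop]
        congr 1
        omega
    exact Prod.ext rfl (Prod.ext rfl this)
  unfold dterm
  rw [map_zsmul, map_add, map_sum]
  simp only [List.length_cons, List.length_nil, zero_add, Finset.sum_range_succ,
    Finset.sum_range_zero, map_zsmul]
  simp only [List.eraseIdx_zero, List.tail_cons, List.eraseIdx_cons_succ, blockOfList, tildeB,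
    List.map_nil]
  rw [Phi_sg φ lam n f (List.take i w ++ [(m, h, [])] ++ List.drop (i + 1) w)
      (Function.update x p ((x p).1, h)),
    Phi_sg φ lam n f (List.take i w ++ [(m, g, [])] ++ List.drop (i + 1) w) x,
    Phi_sg φ lam n f _ (fun j => if j < p then under φ (x j) (x p) else
        if j = p then (ract (x p).1 (φ (x p).2), (x p).2⁻¹ * h) else GAlex.over φ (x j) (x p))]
  · have := FF_B φ hφ lam hlam (cf n f) (cf_inv n f) x p h
    have e2 : (-1 : ℤ) ^ (1 + 1) = 1 := by norm_num
    simp only [e2, pow_one, neg_smul, one_smul, zero_add]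
    rw [← add_assoc, ← sub_eq_add_neg, this, smul_zero]
  · apply List.ext_getElem
    · simp [hl]; omega
    · intro j h1 h2
      simp at h2
      simp only [List.getElem_ofFn, Fin.lt_def, Fin.ext_iff, hxp]
      rcases lt_trichotomy j i with hj | hj | hj
      · simp only [List.append_assoc]
        rw [List.getElem_append_left (by simp; omega)]
        simp only [List.getElem_map, List.getElem_take]
        rw [hw1 j (by omega) (by omega)]
        simp [x, p, hj, underB, under]
      · subst hj
        simp only [List.append_assoc]
        rw [List.getElem_append_right (by simp)]
        simp [p, (by omega : min j w.length = j)]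
      · rw [List.getElem_append_right (by simp; omega)]
        simp only [List.getElem_map, List.getElem_drop, List.length_append, List.length_map, hlt,
          List.length_cons, List.length_nil]
        have e : i + 1 + (j - (i + (0 + 1))) = j := by omega
        simp only [e]
        rw [hw1 j (by omega) (by omega)]
        simp [x, p, overB, GAlex.over, hj.not_gt, hj.ne']
  · apply List.ext_getElem
    · simp [hl]; omega
    · intro j h1 h2
      simp at h2
      simp only [List.getElem_ofFn]
      rcases lt_trichotomy j i with hj | hj | hj
      · simp only [List.append_assoc]
        rw [List.getElem_append_left (by simp; omega)]
        simp only [List.getElem_take]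
        exact hw1 j (by omega) (by omega)
      · subst hj
        simp only [List.append_assoc]
        rw [List.getElem_append_right (by simp)]
        simp [x, hwi, (by omega : min j w.length = j)]
      · rw [List.getElem_append_right (by simp; omega)]
        simp only [List.getElem_drop, List.length_append, hlt,
          List.length_cons, List.length_nil]
        have e : i + 1 + (j - (i + (0 + 1))) = j := by omega
        simp only [e]
        exact hw1 j (by omega) (by omega)
  · apply List.ext_getElem
    · simp [hl]; omega
    · intro j h1 h2
      simp at h2
      simp only [List.getElem_ofFn, hxp]
      rcases lt_trichotomy j i with hj | hj | hj
      · simp only [List.append_assoc]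
        rw [List.getElem_append_left (by simp; omega)]
        simp only [List.getElem_take]
        rw [Function.update_of_ne (by simp [p, Fin.ext_iff]; omega)]
        exact hw1 j (by omega) (by omega)
      · subst hj
        simp only [List.append_assoc]
        rw [List.getElem_append_right (by simp)]
        simp [p, (by omega : min j w.length = j)]
      · rw [List.getElem_append_right (by simp; omega)]
        simp only [List.getElem_drop, List.length_append, hlt,
          List.length_cons, List.length_nil]
        have e : i + 1 + (j - (i + (0 + 1))) = j := by omega
        simp only [e]
        rw [Function.update_of_ne (by simp [p, Fin.ext_iff]; omega)]
        exact hw1 j (by omega) (by omega)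

lemma word_all (hφ : ∀ g : G, φ g ∈ Subgroup.center G)
    (hlam : ∀ g h : G, lam (g * h) = lam g + lam h)
    (hf : f.comp ((QuotientAddGroup.mk' (coinvSub (G := G) (M := M) (n + 1))).comp
          (dgp (M := M) (n + 1))) = 0)
    (w : List (M × G × List G)) (hl : lenW w = n + 2) :
    PhiFLam φ lam n f (dPval φ w) = 0 := by
  by_cases hall : ∀ b ∈ w, b.2.2 = []
  · rw [lenW_sg w hall] at hl
    obtain ⟨x, rfl⟩ := exists_tuple w hall hl
    exact wordA φ lam n f hφ hlam hf x
  · rw [dPval_eq, map_sum]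
    refine Finset.sum_eq_zero fun i _ => ?_
    by_cases hr : ∀ c ∈ w.take i ++ w.drop (i + 1), c.2.2 = []
    · have hsplit : w = w.take i ++ w[i] :: w.drop (i + 1) := by simp
      rcases hwi : w[i] with ⟨m, g, _ | ⟨h, _ | ⟨h', t⟩⟩⟩
      · exfalso
        apply hall
        intro b hb
        rw [hsplit, hwi] at hb
        simp only [List.mem_append, List.mem_cons] at hb
        rcases hb with hb | rfl | hb
        · exact hr b (by simp [hb])
        · rfl
        · exact hr b (by simp [hb])
      · refine wordB φ lam n f hφ hlam w ?_ i m g h i.2 hwi hr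
        have h1 : lenW w = lenW (w.take i ++ w.drop (i + 1)) + 2 := by
          conv_lhs => rw [hsplit, hwi]
          simp only [lenW, List.map_append, List.sum_append, List.map_cons, List.sum_cons,
            List.length_cons, List.length_nil]
          omega
        rw [lenW_sg _ hr, hl] at h1
        have := i.2
        simp at h1
        omega
      · exact dterm_zero2 _ _ _ _ _ _ _ (by simp)
    · exact dterm_zero1 _ _ _ _ _ _ _ hr

end words

/-- Let `λ : G → A` be a group homomorphism, `n ≥ 1`, and let
`f : C^{gp}_n(M;ℤ)_G → A` be a normalized group `n`-cocycle (it kills `D^{gp}_n(M;ℤ)_G`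
and `f ∘ ∂^{gp}_{n+1} = 0`).  Then `Φ_{f,λ} = (f ⊗ id_A) ∘ ψ_{n,λ} ∘ γ_n ∘ proj_n`
vanishes on `D_n(X;ℤ)` and satisfies `Φ_{f,λ} ∘ ∂_{n+1} = 0` on `P_{n+1}(X;ℤ)`;
that is, it defines an `n`-cocycle of the `G`-Alexander multiple conjugation biquandle. -/
theorem mcb_cocycle_of_normalized_group_cocycle
    (hφ : ∀ g : G, φ g ∈ Subgroup.center G)
    (lam : G → A) (hlam : ∀ g h : G, lam (g * h) = lam g + lam h) :
    ∀ (n : ℕ) (f : CgpG (G := G) (M := M) (n + 1) →+ A),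
      (∀ z ∈ DgpGsub (G := G) (M := M) (n + 1), f z = 0) →
      f.comp ((QuotientAddGroup.mk' (coinvSub (G := G) (M := M) (n + 1))).comp
          (dgp (M := M) (n + 1))) = 0 →
      (∀ z ∈ Dsub (G := G) (M := M) (n + 1), PhiFLam φ lam n f z = 0) ∧
        (∀ z ∈ Psub (G := G) (M := M) (n + 2), PhiFLam φ lam n f (dP φ z) = 0) := by
  intro n f hf1 hf2
  refine ⟨partD φ lam n f hf1, ?_⟩
  intro z hz
  suffices h : Psub (G := G) (M := M) (n + 2) ≤ ((PhiFLam φ lam n f).comp (dP φ)).ker from h hz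
  unfold Psub
  rw [AddSubgroup.closure_le]
  rintro _ ⟨w, hw, rfl⟩
  show PhiFLam φ lam n f (dP φ (FreeAbelianGroup.of w)) = 0
  unfold dP
  rw [FreeAbelianGroup.lift_apply_of]
  exact word_all φ lam n f hφ hlam hf2 w hw

end GAlex
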